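/- For real $\nu\ge 0$ and $z>0$ let $J_\nu(z)=\sum_{m=0}^\infty \frac{(-1)^m}{m!\,\Gamma(\nu+m+1)}\left(\frac z2\right)^{\nu+2m}$ be the Bessel function of the first kind of order $\nu$. Let $\nu$ be a real number with $\nu\ge 1$. Write $j_{\nu-1,k}$, $\lambda^{-}_{\nu-1,k}$ and $\lambda^{+}_{\nu-1,k}$ ($k\ge 1$) for the $k$-th positive zero, in increasing order, of $J_{\nu-1}$, $J_{\nu-1}-J_\nu$ and $J_{\nu-1}+J_\nu$ respectively, and let $j'_{\nu-1,k}$ be the $k$-th positive zero of $J_{\nu-1}'$ if $\nu>1$, while for $\nu=1$ the zero of $J_0'$ at the origin is counted as the first one: $j'_{0,1}=0$, and $j'_{0,k+1}$ is the $k$-th positive zero of $J_0'$. (All these increasing enumerations are assumed to exist.) Then for every integer $k\ge 1$ one has $$j_{\nu-1,k}<\lambda^{+}_{\nu-1,k}<j'_{\nu-1,k+1}<\lambda^{-}_{\nu-1,k+1}<j_{\nu-1,k+1}.$$ -/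

import Mathlib

/-- Bessel function of the first kind of real order `ν`, defined via its power series
`J_ν(z) = ∑ₘ (−1)^m / (m! Γ(ν+m+1)) (z/2)^(ν+2m)` (with real-exponent powers).
It is only used at `ν ≥ 0` and `z > 0`. -/
noncomputable def besselJ (ν z : ℝ) : ℝ :=
  ∑' m : ℕ, ((-1 : ℝ) ^ m / (Nat.factorial m * Real.Gamma (ν + m + 1))) *
    (z / 2) ^ (ν + 2 * (m : ℝ))

/-- `x` (indexed by `k ≥ 1`) enumerates the set `S` in increasing order: it is strictly
increasing on indices `k ≥ 1`, each `x k` with `k ≥ 1` lies in `S`, and every element of `S`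
is such an `x k`. -/
def EnumIncreasing (S : Set ℝ) (x : ℕ → ℝ) : Prop :=
  StrictMonoOn x (Set.Ici 1) ∧ (∀ k, 1 ≤ k → x k ∈ S) ∧ ∀ z ∈ S, ∃ k, 1 ≤ k ∧ x k = z

/-- The set of positive zeroes of `f`. -/
def posZeros (f : ℝ → ℝ) : Set ℝ := {z | 0 < z ∧ f z = 0}

/-- The set of zeroes of `J_μ′` that are numbered `j′_{μ,1} < j′_{μ,2} < ⋯`: the positive ones,
together with `z = 0` in the case of order `μ = 0` only (the standard convention
`j′_{0,1} = 0`). -/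
def besselDerivZeros (μ : ℝ) : Set ℝ :=
  {z | z ∈ posZeros (deriv (besselJ μ)) ∨ (μ = 0 ∧ z = 0)}

/-!
Write `μ = ν - 1`, and let `W(f, g) = f g' - f' g` be the Wronskian. The function
`z² W(J_μ, J_{μ+1})` has derivative `z (J_μ² + J_{μ+1}²)` and vanishes at `0`, so `W(J_μ, J_{μ+1})`
is positive on the positive half-line. By Sturm's separation theorem the zeros of `J_μ` alternate
with those of `J_μ + c J_{μ+1}` for `c ≠ 0` and of `J_μ'` (counting `0` if `μ = 0`); the first zeros
then place `λ⁺_{μ,k}`, `j'_{μ,k+1}` and `λ⁻_{μ,k+1}` in the interval `(j_{μ,k}, j_{μ,k+1})`.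
Positivity of the Wronskian also makes `J_{μ+1} / J_μ` strictly increasing there, and at these
three points it takes the values `-1`, `μ / j'_{μ,k+1} ∈ [0, 1)` and `1`, which orders them.
-/

open Set Filter Topology

/-- The Wronskian `W(f, g) = f g' - f' g`, whose sign controls the interlacing of the zeros of `f`
and `g`. -/
noncomputable def wronskian (f g : ℝ → ℝ) (z : ℝ) : ℝ :=
  f z * deriv g z - deriv f z * g z

/-- `T` separates `S` if there is a point of `T` strictly between any two points of `S`; two sets that
separate each other interlace. -/
def Separates (T S : Set ℝ) : Prop :=
  ∀ ⦃a⦄, a ∈ S → ∀ ⦃b⦄, b ∈ S → a < b → ∃ c ∈ T, c ∈ Ioo a b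

section Wronskian

variable {f g : ℝ → ℝ} {a b z : ℝ}

theorem wronskian_swap (f g : ℝ → ℝ) (z : ℝ) : wronskian g f z = -wronskian f g z := by
  rw [wronskian, wronskian]
  ring

theorem wronskian_self_add_smul (hf : DifferentiableAt ℝ f z) (hg : DifferentiableAt ℝ g z)
    (c : ℝ) : wronskian f (f + c • g) z = c * wronskian f g z := by
  rw [wronskian, wronskian, deriv_add hf (hg.const_smul c), deriv_const_smul c hg, Pi.add_apply,
    Pi.smul_apply, smul_eq_mul, smul_eq_mul]
  ring

theorem hasDerivAt_div_eq_wronskian (hf : DifferentiableAt ℝ f z) (hg : DifferentiableAt ℝ g z)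
    (hfz : f z ≠ 0) : HasDerivAt (g / f) (wronskian f g z / f z ^ 2) z := by
  refine (hg.hasDerivAt.div hf.hasDerivAt hfz).congr_deriv ?_
  rw [wronskian, mul_comm (f z), mul_comm (deriv f z)]

theorem strictMonoOn_div_of_wronskian_pos (hf : ∀ z ∈ Ioo a b, DifferentiableAt ℝ f z)
    (hg : ∀ z ∈ Ioo a b, DifferentiableAt ℝ g z) (hW : ∀ z ∈ Ioo a b, 0 < wronskian f g z)
    (hf0 : ∀ z ∈ Ioo a b, f z ≠ 0) : StrictMonoOn (g / f) (Ioo a b) := by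
  have hderiv (z : ℝ) (hz : z ∈ Ioo a b) :=
    hasDerivAt_div_eq_wronskian (hf z hz) (hg z hz) (hf0 z hz)
  refine strictMonoOn_of_deriv_pos (convex_Ioo a b)
    (fun z hz ↦ (hderiv z hz).continuousAt.continuousWithinAt) fun z hz ↦ ?_
  rw [interior_Ioo] at hz
  rw [(hderiv z hz).deriv]
  exact div_pos (hW z hz) (sq_pos_of_ne_zero (hf0 z hz))

theorem exists_mem_Ioo_eq_zero_of_wronskian_ne_zero (hab : a < b)
    (hf : ∀ z ∈ Icc a b, DifferentiableAt ℝ f z) (hg : ∀ z ∈ Icc a b, DifferentiableAt ℝ g z)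
    (hW : ∀ z ∈ Icc a b, wronskian f g z ≠ 0) (ha : f a = 0) (hb : f b = 0) :
    ∃ c ∈ Ioo a b, g c = 0 := by
  -- Otherwise Rolle's theorem applies to `f / g`, whose derivative is `-W(f, g) / g²`.
  by_contra! hg0
  have hg_ne_zero_of_eq_zero {z : ℝ} (hz : z ∈ Icc a b) (hfz : f z = 0) : g z ≠ 0 := by
    intro hgz
    exact hW z hz (by rw [wronskian, hfz, hgz, zero_mul, mul_zero, sub_zero])
  have hg0' (z : ℝ) (hz : z ∈ Icc a b) : g z ≠ 0 := by
    rcases eq_endpoints_or_mem_Ioo_of_mem_Icc hz with rfl | rfl | hz'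
    · exact hg_ne_zero_of_eq_zero hz ha
    · exact hg_ne_zero_of_eq_zero hz hb
    · exact hg0 z hz'
  have hderiv (z : ℝ) (hz : z ∈ Icc a b) :=
    hasDerivAt_div_eq_wronskian (hg z hz) (hf z hz) (hg0' z hz)
  obtain ⟨c, hc, hc0⟩ := exists_hasDerivAt_eq_zero hab
    (fun z hz ↦ (hderiv z hz).continuousAt.continuousWithinAt)
    (by rw [Pi.div_apply, Pi.div_apply, ha, hb, zero_div, zero_div])
    fun z hz ↦ hderiv z (Ioo_subset_Icc_self hz)
  have hc' := Ioo_subset_Icc_self hc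
  rw [wronskian_swap, div_eq_zero_iff, neg_eq_zero] at hc0
  exact hc0.elim (hW c hc') (pow_ne_zero 2 (hg0' c hc'))

theorem separates_posZeros (hf : ∀ z, 0 < z → DifferentiableAt ℝ f z)
    (hg : ∀ z, 0 < z → DifferentiableAt ℝ g z) (hW : ∀ z, 0 < z → wronskian f g z ≠ 0) :
    Separates (posZeros g) (posZeros f) := by
  rintro a ⟨ha, hfa⟩ b ⟨-, hfb⟩ hab
  have hpos {z : ℝ} (hz : z ∈ Icc a b) : 0 < z := ha.trans_le hz.1
  obtain ⟨c, hc, hgc⟩ := exists_mem_Ioo_eq_zero_of_wronskian_ne_zero hab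
    (fun z hz ↦ hf z (hpos hz)) (fun z hz ↦ hg z (hpos hz)) (fun z hz ↦ hW z (hpos hz)) hfa hfb
  exact ⟨c, ⟨ha.trans hc.1, hgc⟩, hc⟩

end Wronskian

namespace EnumIncreasing

variable {S T : Set ℝ} {s t : ℕ → ℝ} {k : ℕ}

theorem notMem_of_mem_Ioo (hs : EnumIncreasing S s) (hk : 1 ≤ k) {z : ℝ}
    (hz : z ∈ Ioo (s k) (s (k + 1))) : z ∉ S := by
  intro hzS
  obtain ⟨i, hi, rfl⟩ := hs.2.2 z hzS
  have hki := (hs.1.lt_iff_lt hk hi).1 hz.1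
  have hik := (hs.1.lt_iff_lt hi (Nat.le_add_left 1 k)).1 hz.2
  omega

theorem lt_succ_of_separates (hs : EnumIncreasing S s) (ht : EnumIncreasing T t)
    (hTS : Separates T S) {l : ℕ} (hk : 1 ≤ k) (hl : 1 ≤ l)
    (hle : ∀ i, 1 ≤ i → i < l → t i ≤ s k) : t l < s (k + 1) := by
  obtain ⟨c, hcT, hkc, hck⟩ := hTS (hs.2.1 k hk) (hs.2.1 (k + 1) hk.step)
    (hs.1 hk (Nat.le_add_left 1 k) k.lt_succ_self)
  obtain ⟨i, hi, rfl⟩ := ht.2.2 c hcT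
  have hli : l ≤ i := not_lt.1 fun hil ↦ (hle i hi hil).not_gt hkc
  exact (ht.1.monotoneOn hl hi hli).trans_lt hck

theorem interlace (hs : EnumIncreasing S s) (ht : EnumIncreasing T t) (hST : Separates S T)
    (hTS : Separates T S) (hfirst : ∀ b ∈ T, ∃ a ∈ S, a < b) (hk : 1 ≤ k) :
    s k < t k ∧ t k < s (k + 1) := by
  induction k, hk using Nat.le_induction with
  | base =>
    obtain ⟨a, haS, ha⟩ := hfirst (t 1) (ht.2.1 1 le_rfl)
    obtain ⟨i, hi, rfl⟩ := hs.2.2 a haS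
    exact ⟨(hs.1.monotoneOn self_mem_Ici hi hi).trans_lt ha,
      hs.lt_succ_of_separates ht hTS le_rfl le_rfl fun i hi hi' ↦ absurd hi hi'.not_ge⟩
  | succ k hk ih =>
    have hk' : 1 ≤ k + 1 := Nat.le_add_left 1 k
    constructor
    · refine ht.lt_succ_of_separates hs hST hk hk' fun i hi hik ↦ ?_
      exact (hs.1.monotoneOn hi hk (Nat.lt_succ_iff.1 hik)).trans ih.1.le
    · refine hs.lt_succ_of_separates ht hTS hk' hk' fun i hi hik ↦ ?_
      exact (ht.1.monotoneOn hi hk (Nat.lt_succ_iff.1 hik)).trans ih.2.le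

end EnumIncreasing

theorem hasDerivAt_tsum_mul_pow {c : ℕ → ℝ} (hc : ∀ t, Summable fun n ↦ c n * t ^ n) (t : ℝ) :
    HasDerivAt (fun t ↦ ∑' n, c n * t ^ n) (∑' n : ℕ, (n + 1) * c (n + 1) * t ^ n) t := by
  set R : ℝ := |t| + 1
  have ht : t ∈ Metric.ball (0 : ℝ) R := by simp [R]
  have hderiv_le (n : ℕ) (s : ℝ) (hs : s ∈ Metric.ball (0 : ℝ) R) :
      ‖c n * (n * s ^ (n - 1))‖ ≤ |c n * (2 * R) ^ n| := by
    have hR : 1 ≤ R := le_add_of_nonneg_left (abs_nonneg t)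
    have hs' : |s| ≤ R := by simpa using (Metric.mem_ball.1 hs).le
    have hn : (n : ℝ) ≤ 2 ^ n := mod_cast n.lt_two_pow_self.le
    rw [Real.norm_eq_abs, abs_mul, abs_mul, abs_mul, abs_pow, abs_pow, Nat.abs_cast, abs_mul,
      abs_two, abs_of_pos (zero_lt_one.trans_le hR), mul_pow]
    gcongr
    exact (pow_le_pow_left₀ (abs_nonneg s) hs' _).trans (pow_le_pow_right₀ hR (n.sub_le 1))
  have hderiv := hasDerivAt_tsum_of_isPreconnected (hc (2 * R)).abs Metric.isOpen_ball
    (convex_ball (0 : ℝ) R).isPreconnected (fun n s _ ↦ (hasDerivAt_pow n s).const_mul (c n))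
    hderiv_le ht (hc t) ht
  have hsum : Summable fun n : ℕ ↦ c n * (n * t ^ (n - 1)) :=
    .of_norm_bounded (hc (2 * R)).abs fun n ↦ hderiv_le n t ht
  refine hderiv.congr_deriv ?_
  rw [hsum.tsum_eq_zero_add]
  simp only [Nat.cast_zero, zero_mul, mul_zero, zero_add, Nat.add_sub_cancel, Nat.cast_succ]
  exact tsum_congr fun n ↦ by ring

/-- The coefficients `1 / (m! Γ(μ + m + 1))` of the Bessel–Clifford function. -/
noncomputable def besselCliffordCoeff (μ : ℝ) (m : ℕ) : ℝ :=
  (m.factorial * Real.Gamma (μ + m + 1))⁻¹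

/-- The Bessel–Clifford function `C_μ(t) = ∑ₘ tᵐ / (m! Γ(μ + m + 1))`, the entire factor in
`J_μ(z) = (z / 2) ^ μ * C_μ(-z² / 4)`. -/
noncomputable def besselClifford (μ t : ℝ) : ℝ :=
  ∑' m : ℕ, besselCliffordCoeff μ m * t ^ m

section BesselClifford

variable (μ t : ℝ)

theorem inv_realGamma_eq_mul_inv_realGamma_add_one (s : ℝ) :
    (Real.Gamma s)⁻¹ = s * (Real.Gamma (s + 1))⁻¹ := by
  rcases eq_or_ne s 0 with rfl | hs
  · simp
  · rw [Real.Gamma_add_one hs, mul_inv, mul_inv_cancel_left₀ hs]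

theorem succ_mul_besselCliffordCoeff_succ (m : ℕ) :
    (m + 1) * besselCliffordCoeff μ (m + 1) = besselCliffordCoeff (μ + 1) m := by
  have hm : (m : ℝ) + 1 ≠ 0 := by positivity
  rw [besselCliffordCoeff, besselCliffordCoeff, Nat.factorial_succ, Nat.cast_mul, Nat.cast_succ,
    mul_assoc, mul_inv, mul_inv_cancel_left₀ hm, add_assoc μ 1, add_comm 1 (m : ℝ)]

theorem besselCliffordCoeff_eq (m : ℕ) :
    besselCliffordCoeff μ m = (μ + m + 1) * besselCliffordCoeff (μ + 1) m := by
  rw [besselCliffordCoeff, besselCliffordCoeff, mul_inv, mul_inv,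
    inv_realGamma_eq_mul_inv_realGamma_add_one (μ + m + 1), add_right_comm μ 1]
  ring

theorem summable_besselClifford : Summable fun m ↦ besselCliffordCoeff μ m * t ^ m := by
  have hgrowth : Tendsto (fun m : ℕ ↦ ((m : ℝ) + 1) * (μ + m + 1)) atTop atTop := by
    have hm := tendsto_natCast_atTop_atTop (R := ℝ)
    exact (tendsto_atTop_add_const_right _ _ hm).atTop_mul_atTop₀
      (tendsto_atTop_add_const_right _ _ (tendsto_atTop_add_const_left _ _ hm))
  refine summable_of_ratio_norm_eventually_le one_half_lt_one ?_
  filter_upwards [hgrowth.eventually_ge_atTop (2 * |t|), hgrowth.eventually_gt_atTop 0]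
    with m hm hm0
  have hcoeff : besselCliffordCoeff μ m =
      ((m + 1) * (μ + m + 1)) * besselCliffordCoeff μ (m + 1) := by
    rw [besselCliffordCoeff_eq, ← succ_mul_besselCliffordCoeff_succ]
    ring
  calc ‖besselCliffordCoeff μ (m + 1) * t ^ (m + 1)‖
      = 1 / 2 * (2 * |t|) * ‖besselCliffordCoeff μ (m + 1) * t ^ m‖ := by
        rw [pow_succ, ← mul_assoc, norm_mul _ t, Real.norm_eq_abs t]
        ring
    _ ≤ 1 / 2 * ((m + 1) * (μ + m + 1)) * ‖besselCliffordCoeff μ (m + 1) * t ^ m‖ := by gcongr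
    _ = 1 / 2 * ‖besselCliffordCoeff μ m * t ^ m‖ := by
        rw [hcoeff, mul_assoc _ (besselCliffordCoeff _ _), norm_mul (_ * _),
          Real.norm_of_nonneg hm0.le, mul_assoc]

theorem hasDerivAt_besselClifford :
    HasDerivAt (besselClifford μ) (besselClifford (μ + 1) t) t := by
  refine (hasDerivAt_tsum_mul_pow (summable_besselClifford μ) t).congr_deriv ?_
  simp only [succ_mul_besselCliffordCoeff_succ, besselClifford]

theorem continuous_besselClifford : Continuous (besselClifford μ) :=
  continuous_iff_continuousAt.2 fun t ↦ (hasDerivAt_besselClifford μ t).continuousAt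

theorem besselClifford_zero : besselClifford μ 0 = (Real.Gamma (μ + 1))⁻¹ := by
  rw [besselClifford, tsum_eq_single 0 fun m hm ↦ by simp [hm]]
  simp [besselCliffordCoeff]

theorem besselClifford_recurrence :
    besselClifford μ t = (μ + 1) * besselClifford (μ + 1) t + t * besselClifford (μ + 2) t := by
  have hshift : HasSum (fun m : ℕ ↦ m * besselCliffordCoeff (μ + 1) m * t ^ m)
      (t * besselClifford (μ + 2) t) := by
    rw [← hasSum_nat_add_iff' 1, Finset.sum_range_one, Nat.cast_zero, zero_mul, zero_mul, sub_zero]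
    refine ((summable_besselClifford (μ + 2) t).hasSum.mul_left t).congr_fun fun m ↦ ?_
    rw [Nat.cast_succ, succ_mul_besselCliffordCoeff_succ, pow_succ, add_assoc μ, one_add_one_eq_two]
    ring
  have hleft := (summable_besselClifford (μ + 1) t).hasSum.mul_left (μ + 1)
  refine (summable_besselClifford μ t).hasSum.unique ((hleft.add hshift).congr_fun fun m ↦ ?_)
  rw [besselCliffordCoeff_eq]
  ring

end BesselClifford

theorem besselJ_eq_rpow_mul_besselClifford {μ z : ℝ} (hz : 0 ≤ z) (h : z ≠ 0 ∨ 0 ≤ μ) :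
    besselJ μ z = (z / 2) ^ μ * besselClifford μ (-(z ^ 2 / 4)) := by
  rw [besselJ, besselClifford, ← tsum_mul_left]
  refine tsum_congr fun m ↦ ?_
  have hadd : (z / 2) ^ (μ + 2 * (m : ℝ)) = (z / 2) ^ μ * (z / 2) ^ (2 * (m : ℝ)) := by
    rcases h with hz0 | hμ
    · exact Real.rpow_add (half_pos (hz.lt_of_ne' hz0)) _ _
    · exact Real.rpow_add_of_nonneg (by positivity) hμ (by positivity)
  have hsq : (z / 2) ^ (2 * (m : ℝ)) = (z ^ 2 / 4) ^ m := by
    rw [Real.rpow_mul (by positivity), Real.rpow_natCast, Real.rpow_two, div_pow]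
    norm_num
  rw [hadd, hsq, neg_pow (z ^ 2 / 4), besselCliffordCoeff]
  ring

section BesselJ

variable {μ z : ℝ}

theorem besselJ_add_besselJ_add_two (μ : ℝ) (hz : 0 < z) :
    besselJ μ z + besselJ (μ + 2) z = 2 * (μ + 1) / z * besselJ (μ + 1) z := by
  have h0 : 0 < z / 2 := half_pos hz
  rw [besselJ_eq_rpow_mul_besselClifford hz.le (.inl hz.ne'),
    besselJ_eq_rpow_mul_besselClifford hz.le (.inl hz.ne'),
    besselJ_eq_rpow_mul_besselClifford hz.le (.inl hz.ne'), besselClifford_recurrence,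
    Real.rpow_add h0, Real.rpow_add h0, Real.rpow_one, Real.rpow_two]
  field_simp
  ring

theorem hasDerivAt_besselJ (μ : ℝ) (hz : 0 < z) :
    HasDerivAt (besselJ μ) (μ / z * besselJ μ z - besselJ (μ + 1) z) z := by
  have hrpow := ((hasDerivAt_id z).div_const 2).rpow_const (p := μ) (.inl (half_pos hz).ne')
  have hclifford := (hasDerivAt_besselClifford μ (-(z ^ 2 / 4))).comp z
    (((hasDerivAt_pow 2 z).div_const 4).neg)
  have hprod : besselJ μ =ᶠ[𝓝 z] fun x ↦ (x / 2) ^ μ * besselClifford μ (-(x ^ 2 / 4)) := by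
    filter_upwards [lt_mem_nhds hz] with x hx
    exact besselJ_eq_rpow_mul_besselClifford hx.le (.inl hx.ne')
  refine ((hrpow.mul hclifford).congr_of_eventuallyEq hprod).congr_deriv ?_
  rw [besselJ_eq_rpow_mul_besselClifford hz.le (.inl hz.ne'),
    besselJ_eq_rpow_mul_besselClifford hz.le (.inl hz.ne'), Real.rpow_add (half_pos hz),
    Real.rpow_one]
  simp only [id, Function.comp_apply, Pi.neg_apply, Real.rpow_sub_one (half_pos hz).ne']
  field_simp
  push_cast
  ring

theorem hasDerivAt_besselJ_add_one (μ : ℝ) (hz : 0 < z) :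
    HasDerivAt (besselJ (μ + 1)) (besselJ μ z - (μ + 1) / z * besselJ (μ + 1) z) z := by
  refine (hasDerivAt_besselJ (μ + 1) hz).congr_deriv ?_
  have hrec := besselJ_add_besselJ_add_two μ hz
  rw [add_assoc μ 1, one_add_one_eq_two]
  linear_combination -hrec

theorem differentiableAt_besselJ (μ : ℝ) (hz : 0 < z) : DifferentiableAt ℝ (besselJ μ) z :=
  (hasDerivAt_besselJ μ hz).differentiableAt

theorem hasDerivAt_deriv_besselJ (μ : ℝ) (hz : 0 < z) :
    HasDerivAt (deriv (besselJ μ))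
      (μ / z * deriv (besselJ μ) z - μ / z ^ 2 * besselJ μ z - deriv (besselJ (μ + 1)) z) z := by
  have hμ := (differentiableAt_besselJ μ hz).hasDerivAt
  have hμ_add_one := (differentiableAt_besselJ (μ + 1) hz).hasDerivAt
  have hderiv : deriv (besselJ μ) =ᶠ[𝓝 z] fun x ↦ μ * x⁻¹ * besselJ μ x - besselJ (μ + 1) x := by
    filter_upwards [lt_mem_nhds hz] with x hx
    rw [(hasDerivAt_besselJ μ hx).deriv, div_eq_mul_inv]
  refine (((((hasDerivAt_inv hz.ne').const_mul μ).mul hμ).sub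
    hμ_add_one).congr_of_eventuallyEq hderiv).congr_deriv ?_
  ring

theorem continuousOn_besselJ (hμ : 0 ≤ μ) : ContinuousOn (besselJ μ) (Ici 0) := by
  have hprod : Continuous fun z : ℝ ↦ (z / 2) ^ μ * besselClifford μ (-(z ^ 2 / 4)) :=
    ((Real.continuous_rpow_const hμ).comp (continuous_id.div_const 2)).mul
      ((continuous_besselClifford μ).comp (by fun_prop))
  exact hprod.continuousOn.congr fun z hz ↦ besselJ_eq_rpow_mul_besselClifford hz (.inr hμ)

theorem besselJ_zero_right (hμ : 0 < μ) : besselJ μ 0 = 0 := by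
  rw [besselJ_eq_rpow_mul_besselClifford le_rfl (.inr hμ.le), zero_div, Real.zero_rpow hμ.ne',
    zero_mul]

theorem eventually_mul_besselJ_add_one_lt_besselJ (hμ : -1 < μ) (c : ℝ) :
    ∀ᶠ z in 𝓝[>] 0, c * besselJ (μ + 1) z < besselJ μ z := by
  have hcont : Continuous fun z : ℝ ↦ besselClifford μ (-(z ^ 2 / 4)) -
      c * (z / 2) * besselClifford (μ + 1) (-(z ^ 2 / 4)) :=
    ((continuous_besselClifford μ).comp (by fun_prop)).sub
      (Continuous.mul (by fun_prop) ((continuous_besselClifford (μ + 1)).comp (by fun_prop)))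
  have hpos : ∀ᶠ z in 𝓝 (0 : ℝ), 0 < besselClifford μ (-(z ^ 2 / 4)) -
      c * (z / 2) * besselClifford (μ + 1) (-(z ^ 2 / 4)) := by
    refine hcont.continuousAt.eventually_const_lt ?_
    simpa [besselClifford_zero] using Real.Gamma_pos_of_pos (neg_lt_iff_pos_add.1 hμ)
  filter_upwards [nhdsWithin_le_nhds hpos, self_mem_nhdsWithin] with z hz (hz0 : 0 < z)
  rw [besselJ_eq_rpow_mul_besselClifford hz0.le (.inl hz0.ne'),
    besselJ_eq_rpow_mul_besselClifford hz0.le (.inl hz0.ne'), Real.rpow_add (half_pos hz0),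
    Real.rpow_one]
  linarith [mul_pos (Real.rpow_pos_of_pos (half_pos hz0) μ) hz]

theorem exists_mem_Ioo_besselJ_pos (hμ : -1 < μ) (hz : 0 < z) : ∃ y ∈ Ioo 0 z, 0 < besselJ μ y := by
  obtain ⟨y, hy_pos, hy⟩ :=
    ((eventually_mul_besselJ_add_one_lt_besselJ hμ 0).and (Ioo_mem_nhdsGT hz)).exists
  exact ⟨y, hy, (zero_mul _).symm.trans_lt hy_pos⟩

end BesselJ

/-- The Wronskian `W(J_μ, J_{μ+1})` multiplied by `z²`, written as a quadratic form in `J_μ` and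
`J_{μ+1}` so that it is continuous up to `z = 0`. -/
noncomputable def scaledBesselWronskian (μ z : ℝ) : ℝ :=
  z ^ 2 * besselJ μ z ^ 2 - (2 * μ + 1) * z * besselJ μ z * besselJ (μ + 1) z +
    z ^ 2 * besselJ (μ + 1) z ^ 2

section Lommel

variable {μ b q z : ℝ}

theorem sq_mul_wronskian_besselJ (μ : ℝ) (hz : 0 < z) :
    z ^ 2 * wronskian (besselJ μ) (besselJ (μ + 1)) z = scaledBesselWronskian μ z := by
  rw [wronskian, (hasDerivAt_besselJ μ hz).deriv, (hasDerivAt_besselJ_add_one μ hz).deriv,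
    scaledBesselWronskian]
  field_simp
  ring

theorem hasDerivAt_scaledBesselWronskian (μ : ℝ) (hz : 0 < z) :
    HasDerivAt (scaledBesselWronskian μ) (z * (besselJ μ z ^ 2 + besselJ (μ + 1) z ^ 2)) z := by
  have hμ := hasDerivAt_besselJ μ hz
  have hμ_add_one := hasDerivAt_besselJ_add_one μ hz
  have hsq := hasDerivAt_pow 2 z
  refine (((hsq.fun_mul (hμ.fun_pow 2)).fun_sub
    ((((hasDerivAt_id' z).const_mul (2 * μ + 1)).fun_mul hμ).fun_mul hμ_add_one)).fun_add
    (hsq.fun_mul (hμ_add_one.fun_pow 2))).congr_deriv ?_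
  field_simp
  ring

theorem continuousOn_scaledBesselWronskian (hμ : 0 ≤ μ) :
    ContinuousOn (scaledBesselWronskian μ) (Ici 0) := by
  have hμ_cont := continuousOn_besselJ hμ
  have hμ_add_one_cont := continuousOn_besselJ (add_nonneg hμ zero_le_one)
  unfold scaledBesselWronskian
  fun_prop

theorem monotoneOn_scaledBesselWronskian (hμ : 0 ≤ μ) :
    MonotoneOn (scaledBesselWronskian μ) (Ici 0) := by
  refine monotoneOn_of_hasDerivWithinAt_nonneg (convex_Ici 0)
    (continuousOn_scaledBesselWronskian hμ)
    (fun z hz ↦ (hasDerivAt_scaledBesselWronskian μ (interior_Ici.subset hz)).hasDerivWithinAt)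
    fun z hz ↦ ?_
  have hz0 : 0 < z := interior_Ici.subset hz
  positivity

theorem scaledBesselWronskian_zero_right (μ : ℝ) : scaledBesselWronskian μ 0 = 0 := by
  simp [scaledBesselWronskian]

theorem scaledBesselWronskian_pos (hμ : 0 ≤ μ) (hz : 0 < z) : 0 < scaledBesselWronskian μ z := by
  have hmono := monotoneOn_scaledBesselWronskian hμ
  have hnonneg {x : ℝ} (hx : 0 ≤ x) : 0 ≤ scaledBesselWronskian μ x := by
    simpa only [scaledBesselWronskian_zero_right] using hmono self_mem_Ici hx hx
  -- Otherwise the form vanishes on `[0, z]`, and so does its derivative `z (J_μ² + J_{μ+1}²)`.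
  by_contra! hz_nonpos
  obtain ⟨y, hy, hy_pos⟩ := exists_mem_Ioo_besselJ_pos (neg_one_lt_zero.trans_le hμ) hz
  have hy0 : 0 < y := hy.1
  have hmax : IsLocalMax (scaledBesselWronskian μ) y := by
    filter_upwards [Ioo_mem_nhds hy.1 hy.2] with x hx
    exact ((hmono (mem_Ici.2 hx.1.le) (mem_Ici.2 hz.le) hx.2.le).trans hz_nonpos).trans
      (hnonneg hy0.le)
  have hderiv := hmax.hasDerivAt_eq_zero (hasDerivAt_scaledBesselWronskian μ hy0)
  have : 0 < y * (besselJ μ y ^ 2 + besselJ (μ + 1) y ^ 2) := by positivity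
  exact this.ne' hderiv

theorem wronskian_besselJ_pos (hμ : 0 ≤ μ) (hz : 0 < z) :
    0 < wronskian (besselJ μ) (besselJ (μ + 1)) z := by
  refine pos_of_mul_pos_right ?_ (sq_nonneg z)
  rw [sq_mul_wronskian_besselJ μ hz]
  exact scaledBesselWronskian_pos hμ hz

theorem wronskian_besselJ_deriv_neg (hμ : 0 ≤ μ) (hz : 0 < z) :
    wronskian (besselJ μ) (deriv (besselJ μ)) z < 0 := by
  have hformula : wronskian (besselJ μ) (deriv (besselJ μ)) z =
      -(wronskian (besselJ μ) (besselJ (μ + 1)) z + μ * (besselJ μ z / z) ^ 2) := by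
    rw [wronskian, wronskian, (hasDerivAt_deriv_besselJ μ hz).deriv,
      (hasDerivAt_besselJ μ hz).deriv]
    ring
  have hW := wronskian_besselJ_pos hμ hz
  rw [hformula, neg_lt_zero]
  positivity

theorem besselJ_add_one_eq_of_deriv_eq_zero (hq : 0 < q) (hderiv : deriv (besselJ μ) q = 0) :
    besselJ (μ + 1) q = μ / q * besselJ μ q :=
  (sub_eq_zero.1 ((hasDerivAt_besselJ μ hq).deriv.symm.trans hderiv)).symm

theorem lt_of_deriv_besselJ_eq_zero (hμ : 0 ≤ μ) (hq : 0 < q)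
    (hderiv : deriv (besselJ μ) q = 0) : μ < q := by
  have hW := scaledBesselWronskian_pos hμ hq
  rw [scaledBesselWronskian, besselJ_add_one_eq_of_deriv_eq_zero hq hderiv] at hW
  have hfactor : 0 < (q ^ 2 - μ * (μ + 1)) * besselJ μ q ^ 2 := by
    refine hW.trans_eq ?_
    field_simp
    ring
  have hsq : 0 < q ^ 2 - μ * (μ + 1) := pos_of_mul_pos_left hfactor (sq_nonneg _)
  nlinarith

theorem besselJ_pos_of_forall_ne_zero (hμ : 0 ≤ μ) (hb : 0 < b)
    (hne : ∀ z ∈ Ioc 0 b, besselJ μ z ≠ 0) : 0 < besselJ μ b := by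
  obtain ⟨y, hy, hy_pos⟩ := exists_mem_Ioo_besselJ_pos (neg_one_lt_zero.trans_le hμ) hb
  by_contra! hb_nonpos
  have hcont : ContinuousOn (besselJ μ) (Icc y b) :=
    (continuousOn_besselJ hμ).mono (Icc_subset_Ici_self.trans (Ici_subset_Ici.2 hy.1.le))
  obtain ⟨c, hc, hc0⟩ := intermediate_value_Icc' hy.2.le hcont ⟨hb_nonpos, hy_pos.le⟩
  exact hne c ⟨hy.1.trans_le hc.1, hc.2⟩ hc0

theorem besselJ_add_one_pos_of_forall_ne_zero (hμ : 0 ≤ μ) (hb : 0 < b)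
    (hne : ∀ z ∈ Ioo 0 b, besselJ μ z ≠ 0) : 0 < besselJ (μ + 1) b := by
  have hμ1 : 0 < μ + 1 := by positivity
  have hpos (z : ℝ) (hz : z ∈ Ioo 0 b) : 0 < besselJ μ z :=
    besselJ_pos_of_forall_ne_zero hμ hz.1 fun x hx ↦ hne x ⟨hx.1, hx.2.trans_lt hz.2⟩
  have hderiv (z : ℝ) (hz : 0 < z) : HasDerivAt (fun x ↦ x ^ (μ + 1) * besselJ (μ + 1) x)
      (z ^ (μ + 1) * besselJ μ z) z := by
    refine ((Real.hasDerivAt_rpow_const (.inl hz.ne')).fun_mul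
      (hasDerivAt_besselJ_add_one μ hz)).congr_deriv ?_
    rw [Real.rpow_sub_one hz.ne']
    ring
  have hmono : StrictMonoOn (fun x ↦ x ^ (μ + 1) * besselJ (μ + 1) x) (Icc 0 b) := by
    refine strictMonoOn_of_deriv_pos (convex_Icc 0 b) ?_ fun z hz ↦ ?_
    · exact ((Real.continuous_rpow_const hμ1.le).continuousOn.mul
        (continuousOn_besselJ hμ1.le)).mono Icc_subset_Ici_self
    · rw [interior_Icc] at hz
      rw [(hderiv z hz.1).deriv]
      exact mul_pos (Real.rpow_pos_of_pos hz.1 _) (hpos z hz)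
  have hlt := hmono (left_mem_Icc.2 hb.le) (right_mem_Icc.2 hb.le) hb
  simp only [Real.zero_rpow hμ1.ne', zero_mul] at hlt
  exact pos_of_mul_pos_right hlt (Real.rpow_nonneg hb.le _)

end Lommel

section Interlacing

variable {μ c z : ℝ} {j j' l : ℕ → ℝ} {k : ℕ}

theorem mem_besselDerivZeros_iff_of_pos (hz : 0 < z) :
    z ∈ besselDerivZeros μ ↔ deriv (besselJ μ) z = 0 := by
  simp [besselDerivZeros, posZeros, hz, hz.ne']

theorem separates_posZeros_besselJ_add_smul (hμ : 0 ≤ μ) (hc : c ≠ 0) :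
    Separates (posZeros (besselJ μ + c • besselJ (μ + 1))) (posZeros (besselJ μ)) ∧
      Separates (posZeros (besselJ μ)) (posZeros (besselJ μ + c • besselJ (μ + 1))) := by
  have hf (z : ℝ) (hz : 0 < z) := differentiableAt_besselJ μ hz
  have hg (z : ℝ) (hz : 0 < z) :=
    (hf z hz).add ((differentiableAt_besselJ (μ + 1) hz).const_smul c)
  have hW (z : ℝ) (hz : 0 < z) :
      wronskian (besselJ μ) (besselJ μ + c • besselJ (μ + 1)) z ≠ 0 := by
    rw [wronskian_self_add_smul (hf z hz) (differentiableAt_besselJ (μ + 1) hz)]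
    exact mul_ne_zero hc (wronskian_besselJ_pos hμ hz).ne'
  refine ⟨separates_posZeros hf hg hW, separates_posZeros hg hf fun z hz ↦ ?_⟩
  rw [wronskian_swap]
  exact neg_ne_zero.2 (hW z hz)

theorem separates_besselDerivZeros_posZeros_besselJ (hμ : 0 ≤ μ) :
    Separates (besselDerivZeros μ) (posZeros (besselJ μ)) := by
  intro a ha b hb hab
  obtain ⟨c, hc, hcab⟩ := separates_posZeros (g := deriv (besselJ μ))
    (fun z hz ↦ differentiableAt_besselJ μ hz)
    (fun z hz ↦ (hasDerivAt_deriv_besselJ μ hz).differentiableAt)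
    (fun z hz ↦ (wronskian_besselJ_deriv_neg hμ hz).ne) ha hb hab
  exact ⟨c, .inl hc, hcab⟩

theorem separates_posZeros_besselJ_besselDerivZeros (hμ : 0 ≤ μ) :
    Separates (posZeros (besselJ μ)) (besselDerivZeros μ) := by
  rintro a (ha | ⟨rfl, rfl⟩) b (hb | ⟨-, rfl⟩) hab
  · refine separates_posZeros (f := deriv (besselJ μ))
      (fun z hz ↦ (hasDerivAt_deriv_besselJ μ hz).differentiableAt)
      (fun z hz ↦ differentiableAt_besselJ μ hz) (fun z hz ↦ ?_) ha hb hab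
    rw [wronskian_swap]
    exact neg_ne_zero.2 (wronskian_besselJ_deriv_neg hμ hz).ne
  · exact absurd ha.1 hab.not_gt
  · have hb1 : besselJ (0 + 1) b = 0 := by
      rw [besselJ_add_one_eq_of_deriv_eq_zero hb.1 hb.2, zero_div, zero_mul]
    by_contra! hne
    exact (besselJ_add_one_pos_of_forall_ne_zero le_rfl hb.1
      fun z hz hz0 ↦ hne z ⟨hz.1, hz0⟩ hz).ne' hb1
  · exact absurd hab (lt_irrefl _)

theorem exists_mem_posZeros_besselJ_lt (hμ : 0 ≤ μ) (hc : 0 < c) {b : ℝ}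
    (hb : b ∈ posZeros (besselJ μ + c • besselJ (μ + 1))) :
    ∃ a ∈ posZeros (besselJ μ), a < b := by
  obtain ⟨hb0, hb_zero⟩ := hb
  rw [Pi.add_apply, Pi.smul_apply, smul_eq_mul] at hb_zero
  by_contra! hne
  have hpos : 0 < besselJ (μ + 1) b :=
    besselJ_add_one_pos_of_forall_ne_zero hμ hb0 fun z hz hz0 ↦ (hne z ⟨hz.1, hz0⟩).not_gt hz.2
  have hJb_neg : besselJ μ b < 0 := by linarith [mul_pos hc hpos]
  refine hJb_neg.not_gt (besselJ_pos_of_forall_ne_zero hμ hb0 fun z hz hz0 ↦ ?_)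
  rcases hz.2.lt_or_eq with hzb | rfl
  · exact (hne z ⟨hz.1, hz0⟩).not_gt hzb
  · exact hJb_neg.ne hz0

theorem exists_mem_posZeros_add_smul_lt (hμ : 0 ≤ μ) (hc : c < 0) {b : ℝ}
    (hb : b ∈ posZeros (besselJ μ)) :
    ∃ a ∈ posZeros (besselJ μ + c • besselJ (μ + 1)), a < b := by
  by_cases hsmaller : ∃ a ∈ posZeros (besselJ μ), a < b
  · obtain ⟨a, ha, hab⟩ := hsmaller
    obtain ⟨x, hx, hxab⟩ := (separates_posZeros_besselJ_add_smul hμ hc.ne).1 ha hb hab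
    exact ⟨x, hx, hxab.2⟩
  · push Not at hsmaller
    have hpos : 0 < besselJ (μ + 1) b := besselJ_add_one_pos_of_forall_ne_zero hμ hb.1
      fun z hz hz0 ↦ (hsmaller z ⟨hz.1, hz0⟩).not_gt hz.2
    obtain ⟨y, hy_lt, hy⟩ := ((eventually_mul_besselJ_add_one_lt_besselJ
      (neg_one_lt_zero.trans_le hμ) (-c)).and (Ioo_mem_nhdsGT hb.1)).exists
    have hcont : ContinuousOn (besselJ μ + c • besselJ (μ + 1)) (Icc y b) :=
      ((continuousOn_besselJ hμ).add
        ((continuousOn_besselJ (add_nonneg hμ zero_le_one)).const_smul c)).mono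
        (Icc_subset_Ici_self.trans (Ici_subset_Ici.2 hy.1.le))
    have hy_pos : 0 < (besselJ μ + c • besselJ (μ + 1)) y := by
      rw [Pi.add_apply, Pi.smul_apply, smul_eq_mul]
      linarith
    have hb_neg : (besselJ μ + c • besselJ (μ + 1)) b < 0 := by
      rw [Pi.add_apply, Pi.smul_apply, smul_eq_mul, hb.2, zero_add]
      exact mul_neg_of_neg_of_pos hc hpos
    obtain ⟨x, hx, hx0⟩ := intermediate_value_Ioo' hy.2.le hcont ⟨hb_neg, hy_pos⟩
    exact ⟨x, ⟨hy.1.trans hx.1, hx0⟩, hx.2⟩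

theorem exists_mem_besselDerivZeros_lt (hμ : 0 ≤ μ) {b : ℝ}
    (hb : b ∈ posZeros (besselJ μ)) : ∃ a ∈ besselDerivZeros μ, a < b := by
  rcases hμ.eq_or_lt' with rfl | hμ0
  · exact ⟨0, .inr ⟨rfl, rfl⟩, hb.1⟩
  · obtain ⟨a, ha, ha0⟩ := exists_deriv_eq_zero hb.1
      ((continuousOn_besselJ hμ).mono Icc_subset_Ici_self)
      ((besselJ_zero_right hμ0).trans hb.2.symm)
    exact ⟨a, .inl ⟨ha.1, ha0⟩, ha.2⟩

theorem mem_Ioo_of_enum_add_smul_of_pos (hμ : 0 ≤ μ) (hc : 0 < c)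
    (hj : EnumIncreasing (posZeros (besselJ μ)) j)
    (hl : EnumIncreasing (posZeros (besselJ μ + c • besselJ (μ + 1))) l) (hk : 1 ≤ k) :
    l k ∈ Ioo (j k) (j (k + 1)) :=
  have hsep := separates_posZeros_besselJ_add_smul hμ hc.ne'
  hj.interlace hl hsep.2 hsep.1 (fun _ ↦ exists_mem_posZeros_besselJ_lt hμ hc) hk

theorem mem_Ioo_of_enum_add_smul_of_neg (hμ : 0 ≤ μ) (hc : c < 0)
    (hj : EnumIncreasing (posZeros (besselJ μ)) j)
    (hl : EnumIncreasing (posZeros (besselJ μ + c • besselJ (μ + 1))) l) (hk : 1 ≤ k) :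
    l (k + 1) ∈ Ioo (j k) (j (k + 1)) :=
  have hsep := separates_posZeros_besselJ_add_smul hμ hc.ne
  have hinterlace (n : ℕ) (hn : 1 ≤ n) : l n < j n ∧ j n < l (n + 1) :=
    hl.interlace hj hsep.1 hsep.2 (fun _ ↦ exists_mem_posZeros_add_smul_lt hμ hc) hn
  ⟨(hinterlace k hk).2, (hinterlace (k + 1) hk.step).1⟩

theorem mem_Ioo_of_enum_besselDerivZeros (hμ : 0 ≤ μ)
    (hj : EnumIncreasing (posZeros (besselJ μ)) j)
    (hj' : EnumIncreasing (besselDerivZeros μ) j') (hk : 1 ≤ k) :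
    j' (k + 1) ∈ Ioo (j k) (j (k + 1)) :=
  have hinterlace (n : ℕ) (hn : 1 ≤ n) : j' n < j n ∧ j n < j' (n + 1) :=
    hj'.interlace hj (separates_besselDerivZeros_posZeros_besselJ hμ)
      (separates_posZeros_besselJ_besselDerivZeros hμ)
      (fun _ ↦ exists_mem_besselDerivZeros_lt hμ) hn
  ⟨(hinterlace k hk).2, (hinterlace (k + 1) hk.step).1⟩

theorem besselJ_ne_zero_of_mem_Ioo (hj : EnumIncreasing (posZeros (besselJ μ)) j) (hk : 1 ≤ k)
    (hz : z ∈ Ioo (j k) (j (k + 1))) : besselJ μ z ≠ 0 :=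
  fun hz0 ↦ hj.notMem_of_mem_Ioo hk hz ⟨(hj.2.1 k hk).1.trans hz.1, hz0⟩

theorem strictMonoOn_besselJ_ratio (hμ : 0 ≤ μ) (hj : EnumIncreasing (posZeros (besselJ μ)) j)
    (hk : 1 ≤ k) :
    StrictMonoOn (besselJ (μ + 1) / besselJ μ) (Ioo (j k) (j (k + 1))) := by
  have hpos (z : ℝ) (hz : z ∈ Ioo (j k) (j (k + 1))) : 0 < z := (hj.2.1 k hk).1.trans hz.1
  exact strictMonoOn_div_of_wronskian_pos
    (fun z hz ↦ differentiableAt_besselJ μ (hpos z hz))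
    (fun z hz ↦ differentiableAt_besselJ (μ + 1) (hpos z hz))
    (fun z hz ↦ wronskian_besselJ_pos hμ (hpos z hz))
    fun z hz ↦ besselJ_ne_zero_of_mem_Ioo hj hk hz

theorem besselJ_ratio_of_add_smul_eq_zero (hc : c ≠ 0) (hz : besselJ μ z ≠ 0)
    (h : (besselJ μ + c • besselJ (μ + 1)) z = 0) :
    (besselJ (μ + 1) / besselJ μ) z = -c⁻¹ := by
  rw [Pi.add_apply, Pi.smul_apply, smul_eq_mul] at h
  rw [Pi.div_apply]
  rw [div_eq_iff hz, eq_neg_of_add_eq_zero_left h, neg_mul_neg, inv_mul_cancel_left₀ hc]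

theorem besselJ_ratio_of_deriv_eq_zero (hz0 : 0 < z) (hz : besselJ μ z ≠ 0)
    (h : deriv (besselJ μ) z = 0) : (besselJ (μ + 1) / besselJ μ) z = μ / z := by
  rw [Pi.div_apply, besselJ_add_one_eq_of_deriv_eq_zero hz0 h, mul_div_cancel_right₀ _ hz]

end Interlacing

theorem stmt18 (ν : ℝ) (hν : 1 ≤ ν)
    (j j' lamMinus lamPlus : ℕ → ℝ)
    (hj : EnumIncreasing (posZeros (besselJ (ν - 1))) j)
    (hj' : EnumIncreasing (besselDerivZeros (ν - 1)) j')
    (hlamMinus : EnumIncreasing (posZeros fun z => besselJ (ν - 1) z - besselJ ν z) lamMinus)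
    (hlamPlus : EnumIncreasing (posZeros fun z => besselJ (ν - 1) z + besselJ ν z) lamPlus)
    (k : ℕ) (hk : 1 ≤ k) :
    j k < lamPlus k ∧ lamPlus k < j' (k + 1) ∧
      j' (k + 1) < lamMinus (k + 1) ∧ lamMinus (k + 1) < j (k + 1) := by
  obtain ⟨μ, rfl⟩ : ∃ μ, ν = μ + 1 := ⟨ν - 1, (sub_add_cancel ν 1).symm⟩
  simp only [add_sub_cancel_right] at hj hj' hlamMinus hlamPlus
  have hμ : 0 ≤ μ := le_of_add_le_add_right ((zero_add 1).trans_le hν)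
  have hplus : EnumIncreasing (posZeros (besselJ μ + (1 : ℝ) • besselJ (μ + 1))) lamPlus := by
    rwa [one_smul]
  have hminus : EnumIncreasing (posZeros (besselJ μ + (-1 : ℝ) • besselJ (μ + 1))) lamMinus := by
    rwa [neg_one_smul, ← sub_eq_add_neg]
  have hp := mem_Ioo_of_enum_add_smul_of_pos hμ one_pos hj hplus hk
  have hd := mem_Ioo_of_enum_besselDerivZeros hμ hj hj' hk
  have hm := mem_Ioo_of_enum_add_smul_of_neg hμ neg_one_lt_zero hj hminus hk
  have hmono := strictMonoOn_besselJ_ratio hμ hj hk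
  have hne {z : ℝ} := besselJ_ne_zero_of_mem_Ioo (z := z) hj hk
  have hd_pos : 0 < j' (k + 1) := (hj.2.1 k hk).1.trans hd.1
  have hd_zero := (mem_besselDerivZeros_iff_of_pos hd_pos).1 (hj'.2.1 (k + 1) hk.step)
  have hratio_d := besselJ_ratio_of_deriv_eq_zero hd_pos (hne hd) hd_zero
  refine ⟨hp.1, (hmono.lt_iff_lt hp hd).1 ?_, (hmono.lt_iff_lt hd hm).1 ?_, hm.2⟩
  · rw [hratio_d, besselJ_ratio_of_add_smul_eq_zero one_ne_zero (hne hp) (hplus.2.1 k hk).2,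
      inv_one]
    exact neg_one_lt_zero.trans_le (div_nonneg hμ hd_pos.le)
  · rw [hratio_d, besselJ_ratio_of_add_smul_eq_zero neg_one_lt_zero.ne (hne hm)
      (hminus.2.1 (k + 1) hk.step).2, inv_neg_one, neg_neg]
    exact (div_lt_one hd_pos).2 (lt_of_deriv_besselJ_eq_zero hμ hd_pos hd_zero)
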